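/- There exists a constant c > 0 depending only on m and n such that the following holds. Let t ≥ 1 be an integer and suppose ω₀, …, ω_d > 0 and T > 0 are such that the function α̃(x) = Σ_{i=0}^{d} (ω_i α_i(x))^{β_i} (with β₀ = β_d = 1) satisfies ∫_{M_{m,n}(𝒪_∞)} α̃(g_t u_s y) dμ_{mn}(s) ≤ 3 c t q^{−mnt} α̃(y) for every y ∈ X with α̃(y) > T. Then for every x ∈ X with α̃(x) > T, every integer N ≥ 1, and every M ≥ T: ∫_{Z_x(M, N−1, t)} α̃(g_{Nt} u_s x) dμ_{mn}(s) ≤ (3 c t q^{−mnt})^N α̃(x), where Z_x(M, N', t) = {s ∈ M_{m,n}(𝒪_∞) : α̃(g_{ℓt} u_s x) > M for all integers ℓ ∈ {1, …, N'}} (so Z_x(M, 0, t) = M_{m,n}(𝒪_∞)). -/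

import Mathlib

/-!
The estimate holds for every positive `c`: with `A = 3 c t q^{-mnt}`, it is the `N`-fold
iteration of the one-step inequality assumed for `α̃`.

For the inductive step, put `a = N t`. Conjugation gives
`g_t u_{s'} g_a u_s = g_{t+a} u_{s + (T⁻¹)^{(m+n)a} s'}` (`gElem_uElem_step`). By translation
invariance of Haar measure, the integral of `s ↦ α̃(g_{t+a} u_s x)` over `Z = Z_x(M, N, t)` is
unchanged if the integrand is replaced by its averages over the cosets of
`(T⁻¹)^{(m+n)a} M_{m,n}(𝒪_∞)` (`lintegral_average`), provided that `Z` is a union of such cosets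
(`excursionSet_translate`). The average at `s ∈ Z` is the integral of `α̃(g_t u_{s'} y)` with
`y = g_a u_s x`, and `α̃(y) > M ≥ T` by definition of `Z`, so it is at most `A α̃(y)`. The induction
hypothesis bounds the integral of `α̃(g_a u_s x)` over the larger set `Z_x(M, N - 1, t)`.

That `Z` is a union of cosets comes from the invariance of `α̃` under `SL_d(𝒪_∞)`
(`alphaTilde_smul`): integral matrices do not increase the norms of wedge products, because `|·|`
is ultrametric and a minor of `k B`, with `k` integral, is an integral combination of
determinants formed from rows of `B`. The same invariance makes all functions of `s` involved
locally constant, and on `M_{m,n}(𝒪_∞)` they depend on finitely many coefficients only; this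
settles all measurability questions, including those of Tonelli's theorem.
-/


open MeasureTheory
open scoped Classical ENNReal

set_option synthInstance.maxHeartbeats 1000000
set_option maxHeartbeats 1000000
set_option linter.unusedSectionVars false

noncomputable section

variable (F : Type*) [Field F] [Fintype F]

/- We realize the completion `K_∞ = 𝔽_q((T⁻¹))` of `K = 𝔽_q(T)` at the place at infinity as
the field of Laurent series in the uniformizer `u = T⁻¹`; the valuation `v` is the `u`-adic
valuation (the order), and `|x| = q^{-v(x)}`. -/

/-- The absolute value `|x| = q^{-v(x)}` on `K_∞ = 𝔽_q((T⁻¹))`. -/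
def absv (x : LaurentSeries F) : ℝ :=
  if x = 0 then 0 else (Fintype.card F : ℝ) ^ (-(HahnSeries.order x))

instance : MeasurableSpace (LaurentSeries F) := borel _

instance (m n : ℕ) : MeasurableSpace (Matrix (Fin m) (Fin n) (LaurentSeries F)) := borel _

/-- the set of matrices with all entries in the valuation ring `𝒪_∞ = 𝔽_q[[T⁻¹]]`. -/
def intMat (m n : ℕ) : Set (Matrix (Fin m) (Fin n) (LaurentSeries F)) :=
  {s | ∀ k l, absv F (s k l) ≤ 1}

/-- sup norm of a vector in `K_∞^d`. -/
def supNorm {d : ℕ} (v : Fin d → LaurentSeries F) : ℝ := ⨆ j, absv F (v j)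

/-- the `i × i` minor of a `d × i` matrix with row set `I`. -/
def minor {d i : ℕ} (s : Matrix (Fin d) (Fin i) (LaurentSeries F))
    (I : {I : Finset (Fin d) // I.card = i}) : LaurentSeries F :=
  (s.submatrix (fun a : Fin i => ((I.1.orderIsoOfFin I.2 a : {x // x ∈ I.1}) : Fin d)) id).det

/-- The norm `‖v₁ ∧ ⋯ ∧ v_i‖` of the wedge product of the columns of a `d × i` matrix:
the maximum of the absolute values of its `i × i` minors. -/
def wedgeNorm {d i : ℕ} (s : Matrix (Fin d) (Fin i) (LaurentSeries F)) : ℝ :=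
  ⨆ I : {I : Finset (Fin d) // I.card = i}, absv F (minor F s I)

/-- the norm of the wedge product `b₁ ∧ ⋯ ∧ b_i` of a tuple of vectors of `K_∞^d`. -/
def wedgeNormVecs {d i : ℕ} (b : Fin i → (Fin d → LaurentSeries F)) : ℝ :=
  wedgeNorm F (Matrix.of fun k j => b j k)

/-- the embedding `R = 𝔽_q[T] ↪ K_∞`, sending `T` to `u⁻¹` (`u = T⁻¹` the Laurent variable). -/
def polyToK : Polynomial F →+* LaurentSeries F :=
  (Polynomial.aeval (HahnSeries.single (-1 : ℤ) (1 : F) : LaurentSeries F)).toRingHom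

/-- `G = SL_d(K_∞)`. -/
abbrev SLK (d : ℕ) := Matrix.SpecialLinearGroup (Fin d) (LaurentSeries F)

/-- `Γ = SL_d(R)`, realized as the subgroup of `G` of matrices with entries in
`R = 𝔽_q[T]`. -/
def Gamma (d : ℕ) : Subgroup (SLK F d) :=
  (Matrix.SpecialLinearGroup.map (polyToK F)).range

/-- the homogeneous space `X = G/Γ`, identified with the `G`-orbit of the lattice `R^d`
(`gΓ ↔ g R^d`). -/
abbrev XSpace (d : ℕ) := SLK F d ⧸ Gamma F d

/-- `u = T⁻¹ ∈ K_∞`, the uniformizer. -/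
def Xu : LaurentSeries F := HahnSeries.single 1 1

lemma Xu_ne_zero : Xu F ≠ 0 := HahnSeries.single_ne_zero one_ne_zero

/-- the matrix of the diagonal element `g_t = diag((T⁻¹)^{-nt} I_m, (T⁻¹)^{mt} I_n)`. -/
def gMat (m n : ℕ) (t : ℤ) : Matrix (Fin (m + n)) (Fin (m + n)) (LaurentSeries F) :=
  Matrix.reindex finSumFinEquiv finSumFinEquiv
    (Matrix.fromBlocks ((Xu F ^ (-(n * t))) • (1 : Matrix (Fin m) (Fin m) (LaurentSeries F))) 0 0
      ((Xu F ^ ((m : ℤ) * t)) • (1 : Matrix (Fin n) (Fin n) (LaurentSeries F))))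

lemma gMat_det (m n : ℕ) (t : ℤ) : (gMat F m n t).det = 1 := by
  unfold gMat
  rw [Matrix.det_reindex_self, Matrix.det_fromBlocks_zero₂₁, Matrix.det_smul, Matrix.det_smul,
    Matrix.det_one, Matrix.det_one, mul_one, mul_one, Fintype.card_fin, Fintype.card_fin,
    ← zpow_natCast (Xu F ^ (-((n : ℤ) * t))) m, ← zpow_natCast (Xu F ^ ((m : ℤ) * t)) n,
    ← zpow_mul, ← zpow_mul, ← zpow_add₀ (Xu_ne_zero F)]
  rw [show (-((n : ℤ) * t)) * (m : ℤ) + ((m : ℤ) * t) * (n : ℤ) = 0 by ring, zpow_zero]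

/-- the element `g_t ∈ G`. -/
def gElem (m n : ℕ) (t : ℤ) : SLK F (m + n) := ⟨gMat F m n t, gMat_det F m n t⟩

/-- the matrix of the upper block-unipotent element `u_s` with blocks `(I_m, s; 0, I_n)`. -/
def uMat {m n : ℕ} (s : Matrix (Fin m) (Fin n) (LaurentSeries F)) :
    Matrix (Fin (m + n)) (Fin (m + n)) (LaurentSeries F) :=
  Matrix.reindex finSumFinEquiv finSumFinEquiv (Matrix.fromBlocks 1 s 0 1)

lemma uMat_det {m n : ℕ} (s : Matrix (Fin m) (Fin n) (LaurentSeries F)) :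
    (uMat F s).det = 1 := by
  unfold uMat
  rw [Matrix.det_reindex_self, Matrix.det_fromBlocks_zero₂₁, Matrix.det_one, Matrix.det_one,
    mul_one]

/-- the element `u_s ∈ G`. -/
def uElem {m n : ℕ} (s : Matrix (Fin m) (Fin n) (LaurentSeries F)) : SLK F (m + n) :=
  ⟨uMat F s, uMat_det F s⟩

/-- The lattice in `K_∞^d` corresponding to a point `x ∈ X = G/Γ`: the set `g R^d` for any
representative `g` of the coset `x`. -/
def latticeSet {d : ℕ} (x : XSpace F d) : Set (Fin d → LaurentSeries F) :=
  {v | ∃ g : SLK F d, (QuotientGroup.mk g : XSpace F d) = x ∧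
    ∃ w : Fin d → Polynomial F, v = (g : Matrix (Fin d) (Fin d) (LaurentSeries F)).mulVec
      (fun j => polyToK F (w j))}

/-- `α_i(x) = max{ 1/‖L‖ : L an i-dimensional x-rational subspace }` for `1 ≤ i ≤ d-1`,
and `α_0(x) = α_d(x) = 1`.  Here a subspace `L ⊆ K_∞^d` is `x`-rational if `L ∩ x` is a
lattice in `L`, and then `‖L‖ = ‖w₁ ∧ ⋯ ∧ w_i‖` for an `R`-basis `w₁, …, w_i` of `L ∩ x`;
equivalently below, the supremum runs over all tuples `b = (b₁, …, b_i)` of `K_∞`-linearly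
independent vectors of the lattice `x` generating `(K_∞-span of b) ∩ x` over `R`. -/
def alpha (d : ℕ) (i : ℕ) (x : XSpace F d) : ℝ :=
  if i = 0 ∨ i = d then 1 else
  sSup {r : ℝ | ∃ b : Fin i → (Fin d → LaurentSeries F),
    (∀ j, b j ∈ latticeSet F x) ∧
    LinearIndependent (LaurentSeries F) b ∧
    (∀ v ∈ latticeSet F x, v ∈ Submodule.span (LaurentSeries F) (Set.range b) →
      ∃ c : Fin i → Polynomial F, v = ∑ j, polyToK F (c j) • b j) ∧
    r = (wedgeNormVecs F b)⁻¹}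

/-- the exponent `β_i = m/i` for `1 ≤ i ≤ m` and `n/(m+n-i)` for `m < i ≤ m+n-1`. -/
def betaE (m n i : ℕ) : ℝ := if i ≤ m then (m : ℝ) / i else (n : ℝ) / ((m + n - i : ℕ) : ℝ)

/-- the exponent `β_i` extended by `β_0 = β_{m+n} = 1`. -/
def betaFull (m n i : ℕ) : ℝ := if i = 0 ∨ i = m + n then 1 else betaE m n i

/-- the Margulis function `α̃ = Σ_{i=0}^{d} (ω_i α_i)^{β_i}`. -/
def alphaTilde (m n : ℕ) (ω : ℕ → ℝ) (x : XSpace F (m + n)) : ℝ :=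
  ∑ i ∈ Finset.range (m + n + 1), (ω i * alpha F (m + n) i x) ^ (betaFull m n i)

end

/-! ### The absolute value on `K_∞` -/

section absv

variable {F : Type*} [Field F] [Fintype F]

lemma one_lt_cardF : (1 : ℝ) < Fintype.card F := by
  exact_mod_cast Fintype.one_lt_card

lemma absv_zero : absv F 0 = 0 := by simp [absv]

lemma absv_nonneg (x : LaurentSeries F) : 0 ≤ absv F x := by
  unfold absv; split_ifs <;> positivity

lemma absv_one : absv F 1 = 1 := by simp [absv]

lemma absv_neg (x : LaurentSeries F) : absv F (-x) = absv F x := by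
  simp [absv, HahnSeries.order_neg]

lemma absv_mul (x y : LaurentSeries F) : absv F (x * y) = absv F x * absv F y := by
  by_cases hx : x = 0
  · simp [absv, hx]
  by_cases hy : y = 0
  · simp [absv, hy]
  have hq : (Fintype.card F : ℝ) ≠ 0 := (zero_lt_one.trans one_lt_cardF).ne'
  simp only [absv, hx, hy, mul_eq_zero, or_self, if_false]
  rw [HahnSeries.order_mul_of_ne_zero, neg_add, zpow_add₀ hq]
  exact mul_ne_zero (by simpa using hx) (by simpa using hy)

/-- Balls of `K_∞` are described by the vanishing of the first coefficients. -/
lemma absv_le_zpow_iff (x : LaurentSeries F) (k : ℤ) :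
    absv F x ≤ (Fintype.card F : ℝ) ^ (-k) ↔ ∀ p < k, x.coeff p = 0 := by
  by_cases hx : x = 0
  · subst hx
    simp only [absv, if_true, HahnSeries.coeff_zero, implies_true, iff_true]
    positivity
  · simp only [absv, hx, if_false]
    rw [zpow_le_zpow_iff_right₀ one_lt_cardF, neg_le_neg_iff]
    constructor
    · intro h p hp
      exact HahnSeries.coeff_eq_zero_of_lt_order (hp.trans_le h)
    · intro h
      by_contra! hlt
      exact hx (HahnSeries.coeff_order_eq_zero.1 (h _ hlt))

lemma absv_add_le {x y : LaurentSeries F} {C : ℝ} (hx : absv F x ≤ C) (hy : absv F y ≤ C) :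
    absv F (x + y) ≤ C := by
  by_cases h0 : x = 0
  · simpa [h0] using hy
  by_cases h1 : y = 0
  · simpa [h1] using hx
  have hC : 0 ≤ C := (absv_nonneg x).trans hx
  by_cases h2 : x + y = 0
  · simpa [h2, absv_zero] using hC
  have h := HahnSeries.min_order_le_order_add h2
  have hmono : ∀ a b : ℤ, a ≤ b → (Fintype.card F : ℝ) ^ (-b) ≤ (Fintype.card F : ℝ) ^ (-a) :=
    fun a b hab => (zpow_le_zpow_iff_right₀ one_lt_cardF).2 (neg_le_neg hab)
  simp only [absv, h0, h1, h2, if_false] at hx hy ⊢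
  rcases min_le_iff.1 h with h | h
  · exact (hmono _ _ h).trans hx
  · exact (hmono _ _ h).trans hy

lemma absv_sum_le {ι : Type*} (s : Finset ι) (f : ι → LaurentSeries F) {C : ℝ} (hC : 0 ≤ C)
    (h : ∀ i ∈ s, absv F (f i) ≤ C) : absv F (∑ i ∈ s, f i) ≤ C := by
  induction s using Finset.induction_on with
  | empty => simpa [absv_zero] using hC
  | insert a s ha ih =>
    rw [Finset.sum_insert ha]
    exact absv_add_le (h a (by simp)) (ih fun i hi => h i (by simp [hi]))

lemma absv_prod_le_one {ι : Type*} (s : Finset ι) (f : ι → LaurentSeries F)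
    (h : ∀ i ∈ s, absv F (f i) ≤ 1) : absv F (∏ i ∈ s, f i) ≤ 1 := by
  induction s using Finset.induction_on with
  | empty => simp [absv_one]
  | insert a s ha ih =>
    rw [Finset.prod_insert ha, absv_mul]
    exact mul_le_one₀ (h a (by simp)) (absv_nonneg _) (ih fun i hi => h i (by simp [hi]))

lemma absv_Xu_zpow (k : ℤ) : absv F (Xu F ^ k) = (Fintype.card F : ℝ) ^ (-k) := by
  rw [Xu, ← RatFunc.single_zpow]
  simp [absv]

end absv

/-! ### Invariance of `α̃` under integral matrices -/

section alpha

variable {F : Type*} [Field F] [Fintype F]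

lemma wedgeNorm_nonneg {d i : ℕ} (B : Matrix (Fin d) (Fin i) (LaurentSeries F)) :
    0 ≤ wedgeNorm F B := Real.iSup_nonneg fun _ => absv_nonneg _

/-- Every determinant formed from rows of `B`, with repetitions and in any order, is zero or
plus or minus a minor. -/
lemma absv_det_rows_le {d i : ℕ} (B : Matrix (Fin d) (Fin i) (LaurentSeries F))
    (f : Fin i → Fin d) : absv F (B.submatrix f id).det ≤ wedgeNorm F B := by
  by_cases hf : Function.Injective f
  · set I : {I : Finset (Fin d) // I.card = i} :=
      ⟨Finset.univ.image f, by simp [Finset.card_image_of_injective _ hf]⟩ with hI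
    have hmem : ∀ a, f a ∈ I.1 := fun a => by simp [hI]
    let σ : Fin i → Fin i := fun a => (I.1.orderIsoOfFin I.2).symm ⟨f a, hmem a⟩
    have hσ : Function.Injective σ := fun a b hab => hf (by
      simpa [σ] using hab)
    let e : Equiv.Perm (Fin i) := Equiv.ofBijective σ (Finite.injective_iff_bijective.1 hσ)
    have h1 : B.submatrix f id = (B.submatrix
        (fun a : Fin i => ((I.1.orderIsoOfFin I.2 a : {x // x ∈ I.1}) : Fin d)) id).submatrix
          e id := by
      refine Matrix.ext fun a b => ?_
      change B (f a) b = B ((I.1.orderIsoOfFin I.2 (σ a)).1) b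
      rw [show ((I.1.orderIsoOfFin I.2 (σ a)).1) = f a from congrArg Subtype.val
        ((I.1.orderIsoOfFin I.2).apply_symm_apply ⟨f a, hmem a⟩)]
    rw [h1, Matrix.det_permute, absv_mul]
    have h2 : absv F ((Equiv.Perm.sign e : ℤ) : LaurentSeries F) = 1 := by
      rcases Int.units_eq_one_or (Equiv.Perm.sign e) with h | h <;>
        simp [h, absv_one, absv_neg]
    rw [h2, one_mul]
    exact le_ciSup (f := fun I => absv F (minor F B I)) (Set.finite_range _).bddAbove I
  · rw [Function.Injective] at hf
    push Not at hf
    obtain ⟨a, b, hab, hne⟩ := hf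
    rw [Matrix.det_zero_of_row_eq hne (by ext j; simp [hab]), absv_zero]
    exact wedgeNorm_nonneg B

/-- Multiplication by an integral matrix does not increase the norm of a wedge product: by
multilinearity, a minor of `k * B` is an integral combination of the determinants formed from
rows of `B`. -/
lemma wedgeNorm_mul_le {d i : ℕ} (k : Matrix (Fin d) (Fin d) (LaurentSeries F))
    (hk : ∀ a b, absv F (k a b) ≤ 1) (B : Matrix (Fin d) (Fin i) (LaurentSeries F)) :
    wedgeNorm F (k * B) ≤ wedgeNorm F B := by
  refine Real.iSup_le (fun I => ?_) (wedgeNorm_nonneg B)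
  set r : Fin i → Fin d :=
    fun a : Fin i => ((I.1.orderIsoOfFin I.2 a : {x // x ∈ I.1}) : Fin d) with hr
  have h : minor F (k * B) I
      = ∑ f : Fin i → Fin d, (∏ a, k (r a) (f a)) * (B.submatrix f id).det := by
    have h1 : minor F (k * B) I =
        (Matrix.detRowAlternating (n := Fin i) (R := LaurentSeries F)).toMultilinearMap
          (fun a => ∑ l, k (r a) l • B l) := by
      change Matrix.det _ = Matrix.det _
      congr 1
      ext a b
      simp [Matrix.mul_apply, hr, Finset.sum_apply]
    rw [h1, MultilinearMap.map_sum]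
    refine Finset.sum_congr rfl fun f _ => ?_
    rw [MultilinearMap.map_smul_univ]
    rfl
  rw [h]
  refine absv_sum_le _ _ (wedgeNorm_nonneg B) fun f _ => ?_
  rw [absv_mul]
  exact (mul_le_of_le_one_left (absv_nonneg _)
    (absv_prod_le_one _ _ fun a _ => hk _ _)).trans (absv_det_rows_le B f)

lemma wedgeNormVecs_mulVec_le {d i : ℕ} (k : Matrix (Fin d) (Fin d) (LaurentSeries F))
    (hk : ∀ a b, absv F (k a b) ≤ 1) (b : Fin i → (Fin d → LaurentSeries F)) :
    wedgeNormVecs F (fun j => k.mulVec (b j)) ≤ wedgeNormVecs F b := by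
  have h := wedgeNorm_mul_le k hk (Matrix.of fun k j => b j k)
  refine le_trans (le_of_eq ?_) h
  unfold wedgeNormVecs
  congr 1

lemma mulVec_mem_latticeSet {d : ℕ} (k : SLK F d) {x : XSpace F d} {v : Fin d → LaurentSeries F}
    (hv : v ∈ latticeSet F x) : k.1.mulVec v ∈ latticeSet F (k • x) := by
  obtain ⟨g, rfl, w, rfl⟩ := hv
  refine ⟨k * g, rfl, w, ?_⟩
  rw [Matrix.mulVec_mulVec]
  rfl

/-- The set of reals whose supremum is `α_i(x)` for `0 < i < d`. -/
def alphaSet (d i : ℕ) (x : XSpace F d) : Set ℝ :=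
  {r : ℝ | ∃ b : Fin i → (Fin d → LaurentSeries F),
    (∀ j, b j ∈ latticeSet F x) ∧
    LinearIndependent (LaurentSeries F) b ∧
    (∀ v ∈ latticeSet F x, v ∈ Submodule.span (LaurentSeries F) (Set.range b) →
      ∃ c : Fin i → Polynomial F, v = ∑ j, polyToK F (c j) • b j) ∧
    r = (wedgeNormVecs F b)⁻¹}

/-- Membership in `SL_d(𝒪_∞)`, phrased as integrality of `k` and of `k⁻¹`. -/
def IsIntSL {d : ℕ} (k : SLK F d) : Prop :=
  (∀ a b, absv F (k.1 a b) ≤ 1) ∧ ∀ a b, absv F ((k⁻¹).1 a b) ≤ 1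

lemma SLK_inv_mulVec {d : ℕ} (k : SLK F d) (v : Fin d → LaurentSeries F) :
    (k⁻¹).1.mulVec (k.1.mulVec v) = v := by
  rw [Matrix.mulVec_mulVec]
  have : (k⁻¹).1 * k.1 = 1 := congrArg Subtype.val (inv_mul_cancel k)
  rw [this, Matrix.one_mulVec]

lemma alphaSet_subset {d i : ℕ} {k : SLK F d} (hk : IsIntSL k) (x : XSpace F d) :
    alphaSet d i x ⊆ alphaSet d i (k • x) := by
  rintro r ⟨b, hb, hli, hspan, rfl⟩
  have hinv : ∀ v, k.1.mulVec ((k⁻¹).1.mulVec v) = v := fun v => by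
    simpa using SLK_inv_mulVec k⁻¹ v
  refine ⟨fun j => k.1.mulVec (b j), fun j => mulVec_mem_latticeSet k (hb j), ?_, ?_, ?_⟩
  · have hker : LinearMap.ker k.1.mulVecLin = ⊥ :=
      LinearMap.ker_eq_bot.2 (Function.LeftInverse.injective (SLK_inv_mulVec k))
    exact hli.map' k.1.mulVecLin hker
  · intro v hv hvs
    have h1 : (k⁻¹).1.mulVec v ∈ latticeSet F x := by
      simpa using mulVec_mem_latticeSet k⁻¹ hv
    have h2 : (k⁻¹).1.mulVec v ∈ Submodule.span (LaurentSeries F) (Set.range b) := by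
      have h3 := Submodule.mem_map_of_mem (f := (k⁻¹).1.mulVecLin) hvs
      rw [Submodule.map_span, ← Set.range_comp] at h3
      have h4 : (⇑(k⁻¹).1.mulVecLin ∘ fun j => k.1.mulVec (b j)) = b := by
        funext j
        exact SLK_inv_mulVec k (b j)
      rwa [h4] at h3
    obtain ⟨c, hc⟩ := hspan _ h1 h2
    refine ⟨c, ?_⟩
    rw [← hinv v, hc, ← Matrix.mulVecLin_apply, map_sum]
    simp
  · congr 1
    refine le_antisymm ?_ (wedgeNormVecs_mulVec_le _ hk.1 b)
    have := wedgeNormVecs_mulVec_le _ hk.2 (fun j => k.1.mulVec (b j))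
    simpa only [SLK_inv_mulVec] using this

lemma alpha_smul {d i : ℕ} {k : SLK F d} (hk : IsIntSL k) (x : XSpace F d) :
    alpha F d i (k • x) = alpha F d i x := by
  have h : alphaSet d i (k • x) = alphaSet d i x := by
    refine (alphaSet_subset hk x).antisymm' ?_
    have := alphaSet_subset (i := i) (k := k⁻¹) ⟨hk.2, by simpa using hk.1⟩ (k • x)
    simpa using this
  unfold alpha
  split_ifs
  · rfl
  · exact congrArg sSup h

/-- `α̃` is invariant under `SL_d(𝒪_∞)`. -/
lemma alphaTilde_smul {m n : ℕ} (ω : ℕ → ℝ) {k : SLK F (m + n)} (hk : IsIntSL k)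
    (x : XSpace F (m + n)) : alphaTilde F m n ω (k • x) = alphaTilde F m n ω x := by
  simp only [alphaTilde, alpha_smul hk]

end alpha

/-! ### Relations between `g_t` and `u_s` -/

section relations

variable {F : Type*} [Field F] [Fintype F] {m n : ℕ}

lemma uElem_add (s s' : Matrix (Fin m) (Fin n) (LaurentSeries F)) :
    uElem F (s + s') = uElem F s * uElem F s' := by
  apply Subtype.ext
  change uMat F (s + s') = uMat F s * uMat F s'
  simp only [uMat, Matrix.reindex_apply, Matrix.submatrix_mul_equiv, Matrix.fromBlocks_multiply]
  simp [add_comm]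

lemma uElem_inv (s : Matrix (Fin m) (Fin n) (LaurentSeries F)) :
    (uElem F s)⁻¹ = uElem F (-s) := by
  rw [inv_eq_iff_mul_eq_one, ← uElem_add, add_neg_cancel]
  apply Subtype.ext
  change uMat F 0 = 1
  simp [uMat]

lemma isIntSL_uElem {s : Matrix (Fin m) (Fin n) (LaurentSeries F)} (hs : s ∈ intMat F m n) :
    IsIntSL (uElem F s) := by
  have key : ∀ s ∈ intMat F m n, ∀ a b, absv F ((uElem F s).1 a b) ≤ 1 := by
    intro s hs a b
    have h1 : ∀ {l : ℕ} (i j : Fin l), absv F ((1 : Matrix (Fin l) (Fin l) _) i j) ≤ 1 := by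
      intro l i j
      rw [Matrix.one_apply]
      split_ifs <;> simp [absv_one, absv_zero]
    change absv F (Matrix.fromBlocks 1 s 0 1 (finSumFinEquiv.symm a) (finSumFinEquiv.symm b)) ≤ 1
    rcases finSumFinEquiv.symm a with i | i <;> rcases finSumFinEquiv.symm b with j | j
    · exact h1 i j
    · exact hs i j
    · simp [absv_zero]
    · exact h1 i j
  refine ⟨key s hs, ?_⟩
  rw [uElem_inv]
  exact key _ fun i j => by simpa [absv_neg] using hs i j

lemma gElem_add (a b : ℤ) : gElem F m n (a + b) = gElem F m n a * gElem F m n b := by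
  apply Subtype.ext
  change gMat F m n (a + b) = gMat F m n a * gMat F m n b
  simp only [gMat, Matrix.reindex_apply, Matrix.submatrix_mul_equiv, Matrix.fromBlocks_multiply]
  have h1 : Xu F ^ (-(n * (a + b)) : ℤ) = Xu F ^ (-(n * a) : ℤ) * Xu F ^ (-(n * b) : ℤ) := by
    rw [← zpow_add₀ (Xu_ne_zero F)]; ring_nf
  have h2 : Xu F ^ ((m : ℤ) * (a + b)) = Xu F ^ ((m : ℤ) * a) * Xu F ^ ((m : ℤ) * b) := by
    rw [← zpow_add₀ (Xu_ne_zero F)]; ring_nf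
  rw [h1, h2]
  generalize Xu F ^ (-(n * a) : ℤ) = A
  generalize Xu F ^ (-(n * b) : ℤ) = B
  generalize Xu F ^ ((m : ℤ) * a) = C
  generalize Xu F ^ ((m : ℤ) * b) = D
  simp [smul_smul, mul_comm]

/-- Conjugation by `g_{-a}` scales the unipotent parameter by `(T⁻¹)^{(m+n)a}`. -/
lemma uElem_mul_gElem (a : ℤ) (s : Matrix (Fin m) (Fin n) (LaurentSeries F)) :
    uElem F s * gElem F m n a = gElem F m n a * uElem F (Xu F ^ ((m + n) * a : ℤ) • s) := by
  apply Subtype.ext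
  change uMat F s * gMat F m n a = gMat F m n a * uMat F _
  simp only [uMat, gMat, Matrix.reindex_apply, Matrix.submatrix_mul_equiv,
    Matrix.fromBlocks_multiply]
  have h1 : Xu F ^ ((m : ℤ) * a) = Xu F ^ (-(n * a) : ℤ) * Xu F ^ ((m + n) * a : ℤ) := by
    rw [← zpow_add₀ (Xu_ne_zero F)]; ring_nf
  rw [h1]
  generalize Xu F ^ (-(n * a) : ℤ) = A
  generalize Xu F ^ ((m + n) * a : ℤ) = B
  simp [smul_smul, mul_comm]

end relations

/-! ### Congruence subgroups and locally constant functions on matrices -/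

section measure

variable {F : Type*} [Field F] [Fintype F] {m n : ℕ}

instance : BorelSpace (Matrix (Fin m) (Fin n) (LaurentSeries F)) := ⟨rfl⟩

/-- The subgroup `(T⁻¹)^k M_{m,n}(𝒪_∞)`, described through coefficients. -/
def ballMat (F : Type*) [Field F] (m n : ℕ) (k : ℤ) :
    AddSubgroup (Matrix (Fin m) (Fin n) (LaurentSeries F)) where
  carrier := {s | ∀ i j, ∀ p < k, (s i j).coeff p = 0}
  zero_mem' := fun i j p _ => by simp
  add_mem' := fun {s s'} hs hs' i j p hp => by simp [hs i j p hp, hs' i j p hp]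
  neg_mem' := fun {s} hs i j p hp => by simp [hs i j p hp]

lemma mem_ballMat {k : ℤ} {s : Matrix (Fin m) (Fin n) (LaurentSeries F)} :
    s ∈ ballMat F m n k ↔ ∀ i j, absv F (s i j) ≤ (Fintype.card F : ℝ) ^ (-k) :=
  forall₂_congr fun i j => (absv_le_zpow_iff (s i j) k).symm

lemma mem_ballMat_zero {s : Matrix (Fin m) (Fin n) (LaurentSeries F)} :
    s ∈ ballMat F m n 0 ↔ s ∈ intMat F m n := by
  rw [mem_ballMat]
  simp [intMat]

lemma ballMat_anti {k l : ℤ} (h : k ≤ l) : ballMat F m n l ≤ ballMat F m n k :=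
  fun _ hs i j p hp => hs i j p (hp.trans_le h)

lemma Xu_smul_mem_ballMat {k l : ℤ} {s : Matrix (Fin m) (Fin n) (LaurentSeries F)}
    (hs : s ∈ ballMat F m n l) : Xu F ^ k • s ∈ ballMat F m n (k + l) := by
  rw [mem_ballMat] at hs ⊢
  intro i j
  have hq : (0 : ℝ) < Fintype.card F := zero_lt_one.trans one_lt_cardF
  rw [Matrix.smul_apply, smul_eq_mul, absv_mul, absv_Xu_zpow, neg_add, zpow_add₀ hq.ne']
  exact mul_le_mul_of_nonneg_left (hs i j) (by positivity)

lemma isOpen_ballMat (k : ℤ) :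
    IsOpen (ballMat F m n k : Set (Matrix (Fin m) (Fin n) (LaurentSeries F))) := by
  have h1 : IsOpen {x : LaurentSeries F | ∀ p < k, x.coeff p = 0} := by
    have h2 : (Valued.v : Valuation (LaurentSeries F) _).restrict
        (HahnSeries.single k (1 : F)) ≠ 0 := by
      simp
    convert Valued.isOpen_closedBall (LaurentSeries F) h2 using 1
    ext x
    simp only [Set.mem_ofPred_eq]
    rw [Valuation.restrict_le_iff, LaurentSeries.valuation_single_zpow,
      LaurentSeries.valuation_le_iff_coeff_lt_eq_zero]
  have h3 : (ballMat F m n k : Set (Matrix (Fin m) (Fin n) (LaurentSeries F)))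
      = ⋂ i, ⋂ j, (fun s => s i j) ⁻¹' {x : LaurentSeries F | ∀ p < k, x.coeff p = 0} := by
    ext s
    simp only [Set.mem_iInter, Set.mem_preimage, Set.mem_ofPred_eq]
    rfl
  rw [h3]
  exact isOpen_iInter_of_finite fun i => isOpen_iInter_of_finite fun j =>
    h1.preimage (by fun_prop)

/-- A function invariant under some congruence subgroup is measurable, for any `σ`-algebra on
the target. -/
lemma measurable_of_invariant {β : Type*} [MeasurableSpace β]
    {f : Matrix (Fin m) (Fin n) (LaurentSeries F) → β} (k : ℤ)
    (hf : ∀ s, ∀ h ∈ ballMat F m n k, f (s + h) = f s) : Measurable f := by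
  intro S _
  refine IsOpen.measurableSet (isOpen_iff_mem_nhds.2 fun s hs => ?_)
  have hopen : IsOpen ((fun s' => s' - s) ⁻¹'
      (ballMat F m n k : Set (Matrix (Fin m) (Fin n) (LaurentSeries F)))) :=
    (isOpen_ballMat k).preimage (by fun_prop)
  refine Filter.mem_of_superset (hopen.mem_nhds (by simp [zero_mem])) fun s' hs' => ?_
  have := hf s _ hs'
  rw [add_sub_cancel] at this
  simpa [Set.mem_preimage, this] using hs

lemma measurableSet_intMat : MeasurableSet (intMat F m n) := by
  have : intMat F m n = (ballMat F m n 0 : Set (Matrix (Fin m) (Fin n) (LaurentSeries F))) := by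
    ext s; exact mem_ballMat_zero.symm
  rw [this]
  exact (isOpen_ballMat 0).measurableSet

/-- The first `K` coefficients of the entries of a matrix. -/
def truncMat (K : ℕ) (s : Matrix (Fin m) (Fin n) (LaurentSeries F)) :
    Fin m → Fin n → Fin K → F := fun i j p => (s i j).coeff p

/-- The matrix with polynomial entries in `T⁻¹` whose coefficients are prescribed. -/
noncomputable def liftMat (K : ℕ) (a : Fin m → Fin n → Fin K → F) :
    Matrix (Fin m) (Fin n) (LaurentSeries F) :=
  Matrix.of fun i j => ∑ p : Fin K, HahnSeries.single (p : ℤ) (a i j p)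

lemma liftMat_truncMat (K : ℕ) {s : Matrix (Fin m) (Fin n) (LaurentSeries F)}
    (hs : s ∈ intMat F m n) : liftMat K (truncMat K s) - s ∈ ballMat F m n K := by
  intro i j p hp
  simp only [liftMat, truncMat, Matrix.sub_apply, Matrix.of_apply, HahnSeries.coeff_sub,
    HahnSeries.coeff_sum, HahnSeries.coeff_single]
  rw [sub_eq_zero]
  by_cases h0 : p < 0
  · rw [mem_ballMat_zero.2 hs i j p h0]
    refine Finset.sum_eq_zero fun x _ => if_neg (by omega)
  · push Not at h0
    lift p to ℕ using h0
    rw [Finset.sum_eq_single ⟨p, by omega⟩]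
    · simp
    · intro b _ hb
      refine if_neg fun h => hb (Fin.ext ?_)
      change (b : ℕ) = p
      omega
    · simp

/-- Averaging: integrating over `Z` a locally constant function is the same as integrating its
averages over the cosets of `(T⁻¹)^k M_{m,n}(𝒪_∞)`, if `Z` is a union of such cosets. Both
variables only matter through finitely many coefficients, so Tonelli's theorem is applied to
functions on a finite set. -/
lemma lintegral_average (μ : Measure (Matrix (Fin m) (Fin n) (LaurentSeries F)))
    (hinv : ∀ a, μ.map (fun s => a + s) = μ) (hnorm : μ (intMat F m n) = 1)
    {f : Matrix (Fin m) (Fin n) (LaurentSeries F) → ℝ≥0∞} {k : ℤ} (hk : 0 ≤ k) {K : ℕ}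
    (hkK : k ≤ K)
    (hf : ∀ s, ∀ h ∈ ballMat F m n K, f (s + h) = f s)
    {Z : Set (Matrix (Fin m) (Fin n) (LaurentSeries F))} (hZ : Z ⊆ intMat F m n)
    (hZinv : ∀ s, ∀ h ∈ ballMat F m n k, s + h ∈ Z ↔ s ∈ Z) :
    ∫⁻ s in Z, f s ∂μ = ∫⁻ s in Z, ∫⁻ s' in intMat F m n, f (s + Xu F ^ k • s') ∂μ ∂μ := by
  have hZm : MeasurableSet Z := by
    have := measurable_of_invariant (f := fun s => s ∈ Z) k
      (fun s h hh => propext (hZinv s h hh))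
    exact measurableSet_setOfPred.2 this
  have hDm : MeasurableSet (intMat F m n) := measurableSet_intMat
  set g := Z.indicator f with hg
  have hginv : ∀ s, ∀ h ∈ ballMat F m n K, g (s + h) = g s := by
    intro s h hh
    simp only [hg, Set.indicator_apply, hZinv s h (ballMat_anti hkK hh), hf s h hh]
  have hgm : Measurable g := measurable_of_invariant K hginv
  have hsmul : ∀ s' ∈ intMat F m n, Xu F ^ k • s' ∈ ballMat F m n k := fun s' hs' => by
    simpa using Xu_smul_mem_ballMat (k := k) (mem_ballMat_zero.2 hs')
  have hgsupp : ∀ s ∉ intMat F m n, g s = 0 := fun s hs =>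
    Set.indicator_of_notMem (fun h => hs (hZ h)) f
  have hfin : IsFiniteMeasure (μ.restrict (intMat F m n)) := ⟨by simp [hnorm]⟩
  have htrans : ∀ h ∈ ballMat F m n k, ∫⁻ s in intMat F m n, g (s + h) ∂μ = ∫⁻ s, g s ∂μ := by
    intro h hh
    have hcont : Measurable fun s : Matrix (Fin m) (Fin n) (LaurentSeries F) => h + s :=
      Continuous.measurable (by fun_prop)
    have h1 : ∫⁻ s, g (s + h) ∂μ = ∫⁻ s, g s ∂μ := by
      conv_rhs => rw [← hinv h, lintegral_map hgm hcont]
      simp only [add_comm]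
    rw [← h1, ← lintegral_indicator hDm]
    refine lintegral_congr fun s => ?_
    by_cases hs : s ∈ intMat F m n
    · rw [Set.indicator_of_mem hs]
    · rw [Set.indicator_of_notMem hs]
      refine (Set.indicator_of_notMem (fun h' => hs (hZ ?_)) f).symm
      exact (hZinv s h hh).1 h'
  let C := Fin m → Fin n → Fin K → F
  let _ : MeasurableSpace C := ⊤
  have hπ : Measurable (truncMat (F := F) (m := m) (n := n) K) := by
    refine measurable_of_invariant K fun s h hh => ?_
    funext i j p
    simp [truncMat, hh i j p (by simp)]
  let G : C × C → ℝ≥0∞ := fun c => g (liftMat K c.1 + Xu F ^ k • liftMat K c.2)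
  have hG : ∀ s ∈ intMat F m n, ∀ s' ∈ intMat F m n,
      g (s + Xu F ^ k • s') = G (truncMat K s, truncMat K s') := by
    intro s hs s' hs'
    have h1 := liftMat_truncMat K hs
    have h2 := ballMat_anti (by omega : (K : ℤ) ≤ k + K)
      (Xu_smul_mem_ballMat (k := k) (liftMat_truncMat K hs'))
    rw [← hginv _ _ (add_mem h1 h2)]
    simp only [G]
    congr 1
    rw [smul_sub]
    abel
  have hGm : Measurable G := measurable_of_countable G
  have hswap : ∫⁻ s in intMat F m n, ∫⁻ s' in intMat F m n, g (s + Xu F ^ k • s') ∂μ ∂μ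
      = ∫⁻ s' in intMat F m n, ∫⁻ s in intMat F m n, g (s + Xu F ^ k • s') ∂μ ∂μ := by
    calc _ = ∫⁻ s in intMat F m n, ∫⁻ s' in intMat F m n,
              G (truncMat K s, truncMat K s') ∂μ ∂μ :=
            setLIntegral_congr_fun hDm fun s hs => setLIntegral_congr_fun hDm fun s' hs' =>
              hG s hs s' hs'
      _ = ∫⁻ s' in intMat F m n, ∫⁻ s in intMat F m n, G (truncMat K s, truncMat K s') ∂μ ∂μ :=
            lintegral_lintegral_swap (Measurable.aemeasurable (hGm.comp
              ((hπ.comp measurable_fst).prodMk (hπ.comp measurable_snd))))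
      _ = _ := setLIntegral_congr_fun hDm fun s' hs' => setLIntegral_congr_fun hDm fun s hs =>
              (hG s hs s' hs').symm
  have hleft : ∫⁻ s in Z, ∫⁻ s' in intMat F m n, f (s + Xu F ^ k • s') ∂μ ∂μ
      = ∫⁻ s in intMat F m n, ∫⁻ s' in intMat F m n, g (s + Xu F ^ k • s') ∂μ ∂μ := by
    have h1 : ∀ s, ∫⁻ s' in intMat F m n, g (s + Xu F ^ k • s') ∂μ
        = Z.indicator (fun s => ∫⁻ s' in intMat F m n, f (s + Xu F ^ k • s') ∂μ) s := by
      intro s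
      by_cases hs : s ∈ Z
      · rw [Set.indicator_of_mem hs]
        exact setLIntegral_congr_fun hDm fun s' hs' =>
          Set.indicator_of_mem ((hZinv s _ (hsmul s' hs')).2 hs) f
      · rw [Set.indicator_of_notMem hs]
        rw [setLIntegral_congr_fun hDm fun s' hs' =>
          Set.indicator_of_notMem (fun h => hs ((hZinv s _ (hsmul s' hs')).1 h)) f]
        exact lintegral_zero
    simp only [h1]
    rw [lintegral_indicator hZm, Measure.restrict_restrict hZm,
      Set.inter_eq_self_of_subset_left hZ]
  rw [hleft, hswap, setLIntegral_congr_fun hDm fun s' hs' => htrans _ (hsmul s' hs'),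
    setLIntegral_const, hnorm, mul_one, hg, lintegral_indicator hZm]

end measure

/-! ### The contraction inequality along `g_{ℓt}` -/

section dynamics

variable {F : Type*} [Field F] [Fintype F] {m n : ℕ}

/-- `s ↦ α̃(g_a u_s x)` is invariant under translation by `(T⁻¹)^{(m+n)a} M_{m,n}(𝒪_∞)`: after
conjugation by `g_a` such a translation is the action of an integral unipotent matrix. -/
lemma alphaTilde_translate (ω : ℕ → ℝ) (x : XSpace F (m + n)) (a : ℤ)
    (s : Matrix (Fin m) (Fin n) (LaurentSeries F)) {h : Matrix (Fin m) (Fin n) (LaurentSeries F)}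
    (hh : h ∈ ballMat F m n ((m + n) * a)) :
    alphaTilde F m n ω ((gElem F m n a * uElem F (s + h)) • x)
      = alphaTilde F m n ω ((gElem F m n a * uElem F s) • x) := by
  set h' := Xu F ^ (-((m + n) * a) : ℤ) • h with hh'
  have hint : h' ∈ intMat F m n := by
    have := Xu_smul_mem_ballMat (k := (-((m + n) * a) : ℤ)) hh
    rw [neg_add_cancel] at this
    exact mem_ballMat_zero.1 this
  have heq : Xu F ^ ((m + n) * a : ℤ) • h' = h := by
    rw [hh', smul_smul, ← zpow_add₀ (Xu_ne_zero F), add_neg_cancel, zpow_zero, one_smul]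
  have : gElem F m n a * uElem F (s + h) = uElem F h' * (gElem F m n a * uElem F s) := by
    rw [← mul_assoc, uElem_mul_gElem, heq, add_comm s h, uElem_add, mul_assoc]
  rw [this, mul_smul, alphaTilde_smul ω (isIntSL_uElem hint)]

lemma gElem_uElem_step (a b : ℤ) (s s' : Matrix (Fin m) (Fin n) (LaurentSeries F)) :
    (gElem F m n b * uElem F s') * (gElem F m n a * uElem F s)
      = gElem F m n (b + a) * uElem F (s + Xu F ^ ((m + n) * a : ℤ) • s') := by
  rw [mul_assoc, ← mul_assoc (uElem F s'), uElem_mul_gElem, mul_assoc, ← uElem_add,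
    ← mul_assoc, ← gElem_add, add_comm s]

/-- The set `Z_x(M, N', t)` of the integral `s` for which `α̃(g_{ℓt} u_s x)` stays above `M`
for `1 ≤ ℓ ≤ N'`. -/
def excursionSet (ω : ℕ → ℝ) (t : ℤ) (x : XSpace F (m + n)) (M : ℝ) (N' : ℕ) :
    Set (Matrix (Fin m) (Fin n) (LaurentSeries F)) :=
  {s | s ∈ intMat F m n ∧ ∀ ℓ : ℕ, 1 ≤ ℓ → ℓ ≤ N' →
    M < alphaTilde F m n ω ((gElem F m n ((ℓ : ℤ) * t) * uElem F s) • x)}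

lemma excursionSet_translate (ω : ℕ → ℝ) {t : ℤ} (ht : 1 ≤ t) (x : XSpace F (m + n)) (M : ℝ)
    (N' : ℕ) (s : Matrix (Fin m) (Fin n) (LaurentSeries F))
    {h : Matrix (Fin m) (Fin n) (LaurentSeries F)}
    (hh : h ∈ ballMat F m n ((m + n) * ((N' : ℤ) * t))) :
    s + h ∈ excursionSet ω t x M N' ↔ s ∈ excursionSet ω t x M N' := by
  refine and_congr ?_ (forall_congr' fun ℓ => forall_congr' fun _ => forall_congr' fun hℓ => ?_)
  · rw [← mem_ballMat_zero, ← mem_ballMat_zero]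
    exact AddSubgroup.add_mem_cancel_right _ (ballMat_anti (by positivity) hh)
  · rw [alphaTilde_translate]
    refine ballMat_anti ?_ hh
    have : (ℓ : ℤ) ≤ N' := by exact_mod_cast hℓ
    gcongr

/-- If the averages of `α̃(g_t u_s y)` contract by the factor `A` above height `T`, then iterating
`N + 1` times along an excursion above `M ≥ T` contracts by `A ^ (N + 1)`. -/
theorem lintegral_excursionSet_le (μ : Measure (Matrix (Fin m) (Fin n) (LaurentSeries F)))
    (hinv : ∀ a, μ.map (fun s => a + s) = μ) (hnorm : μ (intMat F m n) = 1)
    {t : ℤ} (ht : 1 ≤ t) (ω : ℕ → ℝ) {T A : ℝ} (hA : 0 ≤ A)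
    (hstep : ∀ y : XSpace F (m + n), T < alphaTilde F m n ω y →
      (∫⁻ s in intMat F m n,
          ENNReal.ofReal (alphaTilde F m n ω ((gElem F m n t * uElem F s) • y)) ∂μ)
        ≤ ENNReal.ofReal (A * alphaTilde F m n ω y))
    (x : XSpace F (m + n)) (hx : T < alphaTilde F m n ω x) {M : ℝ} (hM : T ≤ M) (N : ℕ) :
    (∫⁻ s in excursionSet ω t x M N, ENNReal.ofReal
        (alphaTilde F m n ω ((gElem F m n (((N + 1 : ℕ) : ℤ) * t) * uElem F s) • x)) ∂μ)
      ≤ ENNReal.ofReal (A ^ (N + 1) * alphaTilde F m n ω x) := by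
  induction N with
  | zero =>
    have h0 : excursionSet ω t x M 0 = intMat F m n := by
      ext s
      refine and_iff_left fun ℓ h1 h2 => ?_
      omega
    simpa [h0] using hstep x hx
  | succ N ih =>
    set a : ℤ := ((N + 1 : ℕ) : ℤ) * t with ha
    have ha0 : 0 ≤ a := by positivity
    have hmn : (0 : ℤ) ≤ m + n := by positivity
    have hb : (((N + 1 + 1 : ℕ) : ℤ) * t) = t + a := by rw [ha]; push_cast; ring
    have hZ : excursionSet ω t x M (N + 1) ⊆ intMat F m n := fun s hs => hs.1
    have hZm : MeasurableSet (excursionSet ω t x M (N + 1)) := measurableSet_setOfPred.2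
      (measurable_of_invariant _ fun s h hh =>
        propext (excursionSet_translate ω ht x M (N + 1) s hh))
    rw [hb, lintegral_average μ hinv hnorm (k := (m + n) * a) (K := ((m + n) * (t + a)).toNat)
      (by positivity)
      (by rw [Int.toNat_of_nonneg (by positivity)]; gcongr; omega)
      (fun s h hh => by
        rw [Int.toNat_of_nonneg (by positivity)] at hh
        rw [alphaTilde_translate ω x (t + a) s hh])
      hZ (fun s h hh => excursionSet_translate ω ht x M (N + 1) s hh)]
    calc _ ≤ ∫⁻ s in excursionSet ω t x M (N + 1), ENNReal.ofReal A * ENNReal.ofReal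
            (alphaTilde F m n ω ((gElem F m n a * uElem F s) • x)) ∂μ := by
          refine setLIntegral_mono' hZm fun s hs => ?_
          have h1 := hstep ((gElem F m n a * uElem F s) • x)
            (hM.trans_lt (hs.2 (N + 1) (by omega) le_rfl))
          simp only [smul_smul, gElem_uElem_step] at h1
          rwa [ENNReal.ofReal_mul hA] at h1
      _ = ENNReal.ofReal A * ∫⁻ s in excursionSet ω t x M (N + 1), ENNReal.ofReal
            (alphaTilde F m n ω ((gElem F m n a * uElem F s) • x)) ∂μ :=
          lintegral_const_mul' _ _ ENNReal.ofReal_ne_top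
      _ ≤ ENNReal.ofReal A * ∫⁻ s in excursionSet ω t x M N, ENNReal.ofReal
            (alphaTilde F m n ω ((gElem F m n a * uElem F s) • x)) ∂μ := by
          gcongr
          exact fun s hs => ⟨hs.1, fun ℓ h1 h2 => hs.2 ℓ h1 (h2.trans (Nat.le_succ N))⟩
      _ ≤ ENNReal.ofReal A * ENNReal.ofReal (A ^ (N + 1) * alphaTilde F m n ω x) := by
          gcongr
      _ = _ := by
          rw [← ENNReal.ofReal_mul hA, ← mul_assoc, ← pow_succ']

end dynamics

/-- **Proposition 6.1.** There is `c > 0` depending only on `m, n` such that the following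
holds.  Let `t ≥ 1` be an integer and `ω_0, …, ω_d > 0`, `T > 0` be such that
`α̃ = Σ_{i=0}^d (ω_i α_i)^{β_i}` (with `β_0 = β_d = 1`) satisfies
`∫_{M_{m,n}(𝒪_∞)} α̃(g_t u_s y) dμ_{mn}(s) ≤ 3 c t q^{-mnt} α̃(y)` for every `y ∈ X` with
`α̃(y) > T`.  Then for every `x ∈ X` with `α̃(x) > T`, every integer `N ≥ 1` and every
`M ≥ T`, `∫_{Z_x(M,N-1,t)} α̃(g_{Nt} u_s x) dμ_{mn}(s) ≤ (3ctq^{-mnt})^N α̃(x)`, where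
`Z_x(M,N',t) = {s ∈ M_{m,n}(𝒪_∞) : α̃(g_{ℓt} u_s x) > M for all 1 ≤ ℓ ≤ N'}`. -/
theorem stmt16 (F : Type*) [Field F] [Fintype F] (m n : ℕ) (hm : 1 ≤ m) (hn : 1 ≤ n)
    (μ : MeasureTheory.Measure (Matrix (Fin m) (Fin n) (LaurentSeries F)))
    (hinv : ∀ a, μ.map (fun s => a + s) = μ)
    (hnorm : μ (intMat F m n) = 1) :
    ∃ c : ℝ, 0 < c ∧ ∀ t : ℤ, 1 ≤ t → ∀ ω : ℕ → ℝ, (∀ i ≤ m + n, 0 < ω i) →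
      ∀ T : ℝ, 0 < T →
      (∀ y : XSpace F (m + n), T < alphaTilde F m n ω y →
        (∫⁻ s in intMat F m n,
            ENNReal.ofReal (alphaTilde F m n ω ((gElem F m n t * uElem F s) • y)) ∂μ)
          ≤ ENNReal.ofReal (3 * c * (t : ℝ) * (Fintype.card F : ℝ) ^ (-(m * n * t : ℤ)) *
              alphaTilde F m n ω y)) →
      ∀ x : XSpace F (m + n), T < alphaTilde F m n ω x → ∀ N : ℕ, 1 ≤ N → ∀ M : ℝ, T ≤ M →
        (∫⁻ s in {s | s ∈ intMat F m n ∧ ∀ ℓ : ℕ, 1 ≤ ℓ → ℓ ≤ N - 1 →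
              M < alphaTilde F m n ω ((gElem F m n ((ℓ : ℤ) * t) * uElem F s) • x)},
            ENNReal.ofReal (alphaTilde F m n ω ((gElem F m n ((N : ℤ) * t) * uElem F s) • x)) ∂μ)
          ≤ ENNReal.ofReal ((3 * c * (t : ℝ) *
              (Fintype.card F : ℝ) ^ (-(m * n * t : ℤ))) ^ N * alphaTilde F m n ω x) := by
  -- The step estimate is a hypothesis about the same `c`, so every positive value works.
  refine ⟨1, one_pos, fun t ht ω _ T _ hstep x hx N hN M hM => ?_⟩
  obtain ⟨N, rfl⟩ : ∃ N', N = N' + 1 := ⟨N - 1, by omega⟩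
  have ht' : (0 : ℝ) ≤ t := by exact_mod_cast zero_le_one.trans ht
  exact lintegral_excursionSet_le μ hinv hnorm ht ω (by positivity) hstep x hx hM N
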